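/- Let C ⊆ F_q^{n×m} be a rank-metric code in which any two distinct codewords are at rank distance at least d. Let μ, δ, ε ≥ 0 satisfy 2ε + μ + δ ≤ d − 1. Let x ∈ C, r ∈ F_q^{n×m}, L̂ ∈ F_q^{n×μ} with rank L̂ = μ, and Ê ∈ F_q^{δ×m} with rank Ê = δ, and suppose rank [[L̂ , r − x],[0 , Ê]] = μ + δ + ε. Then for every x' ∈ C with x' ≠ x one has rank [[L̂ , r − x'],[0 , Ê]] > μ + δ + ε; that is, x is the unique minimizer over C of rank [[L̂ , r − c],[0 , Ê]], so every pattern of ε errors, μ erasures and δ deviations is correctable. -/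

import Mathlib

open Matrix

/-!
Write `M e = [[L, e], [0, E]]`. The column spaces of `M e` and `M e'` meet at least in the column
space of `[L; 0]`, and their sum contains the columns of `[[e' - e, e], [0, E]]`, a matrix of rank
at least `rank (e' - e) + rank E`. The modular law for ranks therefore gives
`rank (e' - e) + rank L + rank E ≤ rank (M e) + rank (M e')`. With `e = r - x` and `e' = r - x'`,
two distinct codewords cannot both make the right-hand side small.
-/

section Submodule

open Module

universe u

variable {R W : Type*} {V : Type u} [Ring R] [HasRankNullity.{u} R] [StrongRankCondition R]
  [AddCommGroup V] [Module R V] [AddCommGroup W] [Module R W]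

lemma finrank_add_finrank_map_le_of_le_ker {s t : Submodule R V} [Module.Finite R t]
    {f : V →ₗ[R] W} (hst : s ≤ t) (hs : s ≤ LinearMap.ker f) :
    finrank R s + finrank R (t.map f) ≤ finrank R t := by
  have hker : s.submoduleOf t ≤ LinearMap.ker (f.domRestrict t) := fun v hv ↦ hs hv
  have hmap : finrank R (t.map f) ≤ finrank R (t ⧸ s.submoduleOf t) := by
    rw [← LinearMap.range_domRestrict, ← Submodule.range_liftQ _ _ hker]
    exact LinearMap.finrank_range_le _
  calc finrank R s + finrank R (t.map f)
      ≤ finrank R (s.submoduleOf t) + finrank R (t ⧸ s.submoduleOf t) := by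
        rw [(Submodule.submoduleOfEquivOfLe hst).finrank_eq]
        gcongr
    _ = finrank R t := by
        rw [add_comm, Submodule.finrank_quotient_add_finrank]

lemma finrank_add_finrank_le_of_le_sup_of_le_inf {s t u v : Submodule R V} [Module.Finite R s]
    [Module.Finite R t] (hu : u ≤ s ⊔ t) (hv : v ≤ s ⊓ t) :
    finrank R u + finrank R v ≤ finrank R s + finrank R t := by
  have hrank : Module.rank R u + Module.rank R v ≤ Module.rank R s + Module.rank R t :=
    (add_le_add (Submodule.rank_mono hu) (Submodule.rank_mono hv)).trans_eq
      (Submodule.rank_sup_add_rank_inf_eq s t)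
  have hs : Module.rank R s < Cardinal.aleph0 := rank_lt_aleph0 R s
  have ht : Module.rank R t < Cardinal.aleph0 := rank_lt_aleph0 R t
  have hst := Cardinal.add_lt_aleph0 hs ht
  have huv := Cardinal.add_lt_aleph0_iff.mp (hrank.trans_lt hst)
  calc finrank R u + finrank R v = Cardinal.toNat (Module.rank R u + Module.rank R v) :=
        (Cardinal.toNat_add huv.1 huv.2).symm
    _ ≤ Cardinal.toNat (Module.rank R s + Module.rank R t) := Cardinal.toNat_le_toNat hrank hst
    _ = finrank R s + finrank R t := Cardinal.toNat_add hs ht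

end Submodule

section BlockTriangular

variable {R k l m n : Type*} [CommRing R] [Fintype m] [Fintype n]

lemma rank_le_rank_fromRows [StrongRankCondition R] (A : Matrix k m R) (B : Matrix l m R) :
    A.rank ≤ (fromRows A B).rank :=
  rank_submatrix_le (fromRows A B) Sum.inl id

lemma range_fromRows_zero_le_range_fromBlocks (A : Matrix k m R) (B : Matrix k n R)
    (D : Matrix l n R) :
    LinearMap.range (fromRows A (0 : Matrix l m R)).mulVecLin ≤
      LinearMap.range (fromBlocks A B 0 D).mulVecLin := by
  rintro _ ⟨v, rfl⟩
  exact ⟨Sum.elim v 0, by simp [fromBlocks_mulVec, fromRows_mulVec]⟩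

lemma range_fromBlocks_sub_le_sup_range (A : Matrix k m R) (B B' : Matrix k n R)
    (D : Matrix l n R) :
    LinearMap.range (fromBlocks (B' - B) B 0 D).mulVecLin ≤
      LinearMap.range (fromBlocks A B 0 D).mulVecLin ⊔
        LinearMap.range (fromBlocks A B' 0 D).mulVecLin := by
  rintro _ ⟨v, rfl⟩
  refine Submodule.mem_sup.mpr ⟨_, ⟨Sum.elim 0 (v ∘ Sum.inr - v ∘ Sum.inl), rfl⟩,
    _, ⟨Sum.elim 0 (v ∘ Sum.inl), rfl⟩, ?_⟩
  ext (i | i)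
  · simp only [mulVecLin_apply, fromBlocks_mulVec, sub_mulVec, mulVec_sub, mulVec_zero, zero_add,
      Pi.add_apply, Pi.sub_apply, Sum.elim_inl, Sum.elim_comp_inl, Sum.elim_comp_inr]
    ring
  · simp [fromBlocks_mulVec, mulVec_sub]

variable [IsDomain R]

lemma rank_add_rank_le_rank_fromBlocks_zero₂₁ (A : Matrix k m R) (B : Matrix k n R)
    (D : Matrix l n R) : A.rank + D.rank ≤ (fromBlocks A B 0 D).rank := by
  let lower : (k ⊕ l → R) →ₗ[R] (l → R) := LinearMap.funLeft R R Sum.inr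
  have hker : LinearMap.range (fromRows A (0 : Matrix l m R)).mulVecLin ≤ LinearMap.ker lower := by
    rintro _ ⟨v, rfl⟩
    ext i
    simp [lower, fromRows_mulVec, LinearMap.funLeft_apply]
  have hmap : LinearMap.range D.mulVecLin ≤
      (LinearMap.range (fromBlocks A B 0 D).mulVecLin).map lower := by
    rintro _ ⟨v, rfl⟩
    refine ⟨_, ⟨Sum.elim 0 v, rfl⟩, ?_⟩
    ext i
    simp [lower, fromBlocks_mulVec, LinearMap.funLeft_apply]
  exact (add_le_add (rank_le_rank_fromRows A 0) (Submodule.finrank_mono hmap)).trans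
    (finrank_add_finrank_map_le_of_le_ker (range_fromRows_zero_le_range_fromBlocks A B D) hker)

lemma rank_sub_add_rank_add_rank_le_rank_fromBlocks_add (A : Matrix k m R)
    (B B' : Matrix k n R) (D : Matrix l n R) :
    (B' - B).rank + A.rank + D.rank ≤
      (fromBlocks A B 0 D).rank + (fromBlocks A B' 0 D).rank := by
  calc (B' - B).rank + A.rank + D.rank
      = (B' - B).rank + D.rank + A.rank := add_right_comm _ _ _
    _ ≤ (fromBlocks (B' - B) B 0 D).rank + (fromRows A (0 : Matrix l m R)).rank :=
        add_le_add (rank_add_rank_le_rank_fromBlocks_zero₂₁ _ _ _) (rank_le_rank_fromRows A 0)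
    _ ≤ (fromBlocks A B 0 D).rank + (fromBlocks A B' 0 D).rank :=
        finrank_add_finrank_le_of_le_sup_of_le_inf (range_fromBlocks_sub_le_sup_range A B B' D)
          (le_inf (range_fromRows_zero_le_range_fromBlocks A B D)
            (range_fromRows_zero_le_range_fromBlocks A B' D))

end BlockTriangular

theorem errata_correction_capability_general
    {R k l m n : Type*} [CommRing R] [IsDomain R] [Fintype m] [Fintype n]
    {ε d : ℕ} (C : Set (Matrix k n R))
    (hC : ∀ a ∈ C, ∀ b ∈ C, a ≠ b → d ≤ (b - a).rank)
    (x : Matrix k n R) (hx : x ∈ C) (r : Matrix k n R) (L : Matrix k m R) (E : Matrix l n R)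
    (hd : 2 * ε + L.rank + E.rank + 1 ≤ d)
    (hrk : (fromBlocks L (r - x) 0 E).rank ≤ L.rank + E.rank + ε) :
    ∀ x' ∈ C, x' ≠ x → L.rank + E.rank + ε < (fromBlocks L (r - x') 0 E).rank := by
  intro x' hx' hne
  have hdist : d ≤ (x - x').rank := hC x' hx' x hx hne
  have hsum := rank_sub_add_rank_add_rank_le_rank_fromBlocks_add L (r - x) (r - x') E
  rw [sub_sub_sub_cancel_left] at hsum
  omega

/-- a rank-metric code with minimum rank distance `d` corrects
every pattern of `ε` errors, `μ` erasures and `δ` deviations provided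
`2ε + μ + δ ≤ d − 1`: the transmitted codeword is the unique minimizer of
`rank [[L, r − c],[0, E]]` over `c ∈ C`. -/
theorem errata_correction_capability
    {F : Type*} [Field F] [Fintype F] {n m μ δ ε d : ℕ}
    (C : Set (Matrix (Fin n) (Fin m) F))
    (hC : ∀ a ∈ C, ∀ b ∈ C, a ≠ b → d ≤ (b - a).rank)
    (hεμδ : 2 * ε + μ + δ + 1 ≤ d)
    (x : Matrix (Fin n) (Fin m) F) (hx : x ∈ C)
    (r : Matrix (Fin n) (Fin m) F)
    (L : Matrix (Fin n) (Fin μ) F) (hL : L.rank = μ)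
    (E : Matrix (Fin δ) (Fin m) F) (hE : E.rank = δ)
    (hrk : (Matrix.fromBlocks L (r - x) 0 E).rank = μ + δ + ε) :
    ∀ x' ∈ C, x' ≠ x →
      μ + δ + ε < (Matrix.fromBlocks L (r - x') 0 E).rank := by
  simpa only [hL, hE] using
    errata_correction_capability_general (ε := ε) C hC x hx r L E (by omega) (by omega)
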